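/- arXiv:2410.00879 — 6 statements merged into one kernel-verified Lean document; each statement's English description precedes it below -/
import Mathlib

section
/- Let H and K be complex Hilbert spaces, V ⊆ H and W ⊆ K closed subspaces, Q : H ≃ₗᵢ[ℂ] K a unitary operator, and Q₊₊, Q₋₋, Q₊₋, Q₋₊ its compressions. Then Q₊₋ restricts to a bijection from ker Q₋₋ onto ker(Q₊₊†): the restriction of Q₊₋ to ker Q₋₋ ⊆ Vᗮ is injective and its image is exactly the kernel of the adjoint Q₊₊† : W →L[ℂ] V. Likewise, Q₋₊ restricts to a bijection from ker Q₊₊ onto ker(Q₋₋†). -/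
noncomputable section

variable {H K : Type*}
  [NormedAddCommGroup H] [InnerProductSpace ℂ H] [CompleteSpace H]
  [NormedAddCommGroup K] [InnerProductSpace ℂ K] [CompleteSpace K]

/-- The compression `Q₊₊ : V → W`, `u ↦ P_W (Q u)`. -/
def Qpp (V : Submodule ℂ H) (W : Submodule ℂ K) [CompleteSpace W] (Q : H ≃ₗᵢ[ℂ] K) :
    V →L[ℂ] W :=
  (Submodule.orthogonalProjectionOnto W).comp (Q.toLinearIsometry.toContinuousLinearMap.comp V.subtypeL)

/-- The compression `Q₋₋ : Vᗮ → Wᗮ`, `u ↦ P_{Wᗮ} (Q u)`. -/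
def Qmm (V : Submodule ℂ H) (W : Submodule ℂ K) [CompleteSpace W] (Q : H ≃ₗᵢ[ℂ] K) :
    Vᗮ →L[ℂ] Wᗮ :=
  (Submodule.orthogonalProjectionOnto Wᗮ).comp (Q.toLinearIsometry.toContinuousLinearMap.comp Vᗮ.subtypeL)

/-- The compression `Q₊₋ : Vᗮ → W`, `u ↦ P_W (Q u)`. -/
def Qpm (V : Submodule ℂ H) (W : Submodule ℂ K) [CompleteSpace W] (Q : H ≃ₗᵢ[ℂ] K) :
    Vᗮ →L[ℂ] W :=
  (Submodule.orthogonalProjectionOnto W).comp (Q.toLinearIsometry.toContinuousLinearMap.comp Vᗮ.subtypeL)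

/-- The compression `Q₋₊ : V → Wᗮ`, `u ↦ P_{Wᗮ} (Q u)`. -/
def Qmp (V : Submodule ℂ H) (W : Submodule ℂ K) [CompleteSpace W] (Q : H ≃ₗᵢ[ℂ] K) :
    V →L[ℂ] Wᗮ :=
  (Submodule.orthogonalProjectionOnto Wᗮ).comp (Q.toLinearIsometry.toContinuousLinearMap.comp V.subtypeL)

theorem offdiag_aux (V V' : Submodule ℂ H) (W W' : Submodule ℂ K)
    [CompleteSpace V] [CompleteSpace V'] [CompleteSpace W] [CompleteSpace W']
    (hV : Vᗮ = V') (hW : W'ᗮ = W) (Q : H ≃ₗᵢ[ℂ] K)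
    (A : V →L[ℂ] W) (B : V' →L[ℂ] W) (C : V' →L[ℂ] W')
    (hA : ∀ v, A v = W.orthogonalProjectionOnto (Q v))
    (hB : ∀ v, B v = W.orthogonalProjectionOnto (Q v))
    (hC : ∀ v, C v = W'.orthogonalProjectionOnto (Q v)) :
    Set.InjOn B (LinearMap.ker C.toLinearMap) ∧
      B '' (LinearMap.ker C.toLinearMap) =
        (LinearMap.ker (ContinuousLinearMap.adjoint A).toLinearMap : Set W) := by
  have hker : ∀ u : V', C u = 0 ↔ Q u ∈ W := by
    intro u
    rw [hC, Submodule.orthogonalProjectionOnto_eq_zero_iff, hW]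
  have hBu : ∀ u : V', C u = 0 → (B u : K) = Q u := by
    intro u hu
    rw [hB]
    exact Submodule.starProjection_eq_self_iff.2 ((hker u).1 hu)
  have hadj : ∀ w : W, ContinuousLinearMap.adjoint A w = 0 ↔ Q.symm w ∈ V' := by
    intro w
    have key : ∀ v : V, inner ℂ v (ContinuousLinearMap.adjoint A w)
        = inner ℂ (v : H) (Q.symm w) := by
      intro v
      rw [ContinuousLinearMap.adjoint_inner_right, hA,
        Submodule.inner_orthogonalProjectionOnto_eq_of_mem_right,
        ← Q.inner_map_map, Q.apply_symm_apply]
    rw [← hV, Submodule.mem_orthogonal]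
    constructor
    · intro h v hv
      rw [← key ⟨v, hv⟩, h, inner_zero_right]
    · intro h
      refine ext_inner_left ℂ fun v => ?_
      rw [key, h v v.2, inner_zero_right]
  refine ⟨?_, ?_⟩
  · intro a ha b hb hab
    have ha' : C a = 0 := ha
    have hb' : C b = 0 := hb
    apply Subtype.ext
    apply Q.injective
    rw [← hBu a ha', ← hBu b hb', hab]
  · ext w
    constructor
    · rintro ⟨u, hu, rfl⟩
      have hu' : C u = 0 := hu
      refine (hadj _).2 ?_
      rw [hBu u hu', Q.symm_apply_apply]
      exact u.2
    · intro hw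
      have h := (hadj w).1 hw
      have hc : C ⟨Q.symm w, h⟩ = 0 := (hker _).2 (by simp)
      refine ⟨⟨Q.symm w, h⟩, hc, ?_⟩
      apply Subtype.ext
      rw [hBu _ hc, Q.apply_symm_apply]

/-- the off-diagonal compression `Q₊₋` restricts to a bijection from
`ker Q₋₋` onto `ker Q₊₊†`, and `Q₋₊` restricts to a bijection from `ker Q₊₊` onto
`ker Q₋₋†`. -/
theorem offdiagonal_kernel_bijections
    (V : Submodule ℂ H) [CompleteSpace V] (W : Submodule ℂ K) [CompleteSpace W]
    (Q : H ≃ₗᵢ[ℂ] K) :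
    (Set.InjOn (Qpm V W Q) (LinearMap.ker (Qmm V W Q).toLinearMap) ∧
      (Qpm V W Q) '' (LinearMap.ker (Qmm V W Q).toLinearMap) =
        (LinearMap.ker (ContinuousLinearMap.adjoint (Qpp V W Q)).toLinearMap : Set W)) ∧
    (Set.InjOn (Qmp V W Q) (LinearMap.ker (Qpp V W Q).toLinearMap) ∧
      (Qmp V W Q) '' (LinearMap.ker (Qpp V W Q).toLinearMap) =
        (LinearMap.ker (ContinuousLinearMap.adjoint (Qmm V W Q)).toLinearMap : Set Wᗮ)) := by
  exact ⟨offdiag_aux V Vᗮ W Wᗮ rfl (Submodule.orthogonal_orthogonal W) Q _ _ _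
      (fun _ => rfl) (fun _ => rfl) (fun _ => rfl),
    offdiag_aux Vᗮ V Wᗮ W (Submodule.orthogonal_orthogonal V) rfl Q _ _ _
      (fun _ => rfl) (fun _ => rfl) (fun _ => rfl)⟩

end
end

section
/- Let H and K be complex Hilbert spaces, V ⊆ H and W ⊆ K closed subspaces, Q : H ≃ₗᵢ[ℂ] K a unitary operator, and Q₊₊, Q₋₋, Q₊₋, Q₋₊ its compressions. If the off-diagonal compressions Q₊₋ and Q₋₊ are compact operators, then: ker Q₊₊ and ker Q₋₋ are finite-dimensional; the ranges of Q₊₊ and Q₋₋ are closed; and the orthogonal complement of range Q₊₊ in W and the orthogonal complement of range Q₋₋ in Wᗮ are finite-dimensional. -/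
noncomputable section

variable {H K : Type*}
  [NormedAddCommGroup H] [InnerProductSpace ℂ H] [CompleteSpace H]
  [NormedAddCommGroup K] [InnerProductSpace ℂ K] [CompleteSpace K]

variable {H K : Type*}
  [NormedAddCommGroup H] [InnerProductSpace ℂ H] [CompleteSpace H]
  [NormedAddCommGroup K] [InnerProductSpace ℂ K] [CompleteSpace K]

open Filter Topology in
theorem aux_bdd_below {E F G : Type*}
    [NormedAddCommGroup E] [InnerProductSpace ℂ E] [CompleteSpace E]
    [NormedAddCommGroup F] [InnerProductSpace ℂ F]
    [NormedAddCommGroup G] [InnerProductSpace ℂ G]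
    (A : E →L[ℂ] F) (B : E →L[ℂ] G) (hB : IsCompactOperator B)
    (h : ∀ x, ‖x‖ ≤ ‖A x‖ + ‖B x‖) (hA : ∀ x, A x = 0 → x = 0) :
    ∃ C, AntilipschitzWith C A := by
  have hP : AntilipschitzWith 2 (A.prod B) := by
    refine AddMonoidHomClass.antilipschitz_of_bound _ fun x => ?_
    have h1 : ‖A x‖ ≤ ‖(A.prod B) x‖ := norm_fst_le ((A.prod B) x)
    have h2 : ‖B x‖ ≤ ‖(A.prod B) x‖ := norm_snd_le ((A.prod B) x)
    have := h x
    change ‖x‖ ≤ 2 * ‖(A.prod B) x‖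
    linarith
  have hPe : IsClosedEmbedding (A.prod B) := hP.isClosedEmbedding (A.prod B).uniformContinuous
  rw [antilipschitzWith_iff_exists_mul_le_norm]
  by_contra hcon
  push Not at hcon
  have hseq : ∀ n : ℕ, ∃ x : E, ‖x‖ = 1 ∧ ‖A x‖ < 1 / ((n : ℝ) + 1) := by
    intro n
    obtain ⟨x, hx⟩ := hcon (1 / ((n : ℝ) + 1)) (by positivity)
    have hx0 : x ≠ 0 := by
      rintro rfl
      simp at hx
    have hn : 0 < ‖x‖ := norm_pos_iff.mpr hx0
    refine ⟨((‖x‖⁻¹ : ℝ) : ℂ) • x, ?_, ?_⟩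
    · rw [norm_smul, Complex.norm_real, norm_inv, norm_norm, inv_mul_cancel₀ hn.ne']
    · rw [map_smul, norm_smul, Complex.norm_real, norm_inv, norm_norm]
      rw [inv_mul_lt_iff₀ hn, mul_comm]
      exact hx
  choose x hx1 hxA using hseq
  have hA0 : Tendsto (fun n => A (x n)) atTop (𝓝 0) :=
    squeeze_zero_norm (fun n => (hxA n).le) tendsto_one_div_add_atTop_nhds_zero_nat
  obtain ⟨S, hS, hS'⟩ := IsCompactOperator.image_closedBall_subset_compact
    (f := B.toLinearMap) hB 1
  obtain ⟨y, -, ψ, hψ, hψy⟩ := hS.tendsto_subseq (x := fun n => B (x n))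
    (fun n => hS' ⟨x n, by simp [hx1], rfl⟩)
  have hlim : Tendsto (fun n => (A.prod B) (x (ψ n))) atTop (𝓝 (0, y)) :=
    (hA0.comp hψ.tendsto_atTop).prodMk_nhds hψy
  have hmem : ((0 : F), y) ∈ Set.range (A.prod B) :=
    hPe.isClosed_range.mem_of_tendsto hlim (Eventually.of_forall fun n => ⟨_, rfl⟩)
  obtain ⟨z, hz⟩ := hmem
  rw [← hz] at hlim
  have hxz : Tendsto (fun n => x (ψ n)) atTop (𝓝 z) :=
    (hPe.isInducing.tendsto_nhds_iff).2 hlim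
  have hz0 : z = 0 := hA z (congrArg Prod.fst hz)
  have hn := hxz.norm
  simp only [hx1, hz0, norm_zero] at hn
  exact one_ne_zero (tendsto_nhds_unique tendsto_const_nhds hn)

theorem aux_findim {E G : Type*}
    [NormedAddCommGroup E] [InnerProductSpace ℂ E] [CompleteSpace E]
    [NormedAddCommGroup G] [InnerProductSpace ℂ G]
    (B : E →L[ℂ] G) (hB : IsCompactOperator B)
    (h : ∀ x, ‖x‖ ≤ ‖B x‖) : FiniteDimensional ℂ E := by
  have hP : AntilipschitzWith 1 B :=
    AddMonoidHomClass.antilipschitz_of_bound _ fun x => by simpa using h x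
  have hPe := hP.isClosedEmbedding B.uniformContinuous
  obtain ⟨S, hS, hS'⟩ := IsCompactOperator.image_closedBall_subset_compact
    (f := B.toLinearMap) hB 1
  refine FiniteDimensional.of_isCompact_closedBall₀ ℂ one_pos
    ((hPe.isCompact_preimage hS).of_isClosed_subset Metric.isClosed_closedBall ?_)
  intro x hx
  exact hS' ⟨x, hx, rfl⟩

theorem aux_ker_range {E F G : Type*}
    [NormedAddCommGroup E] [InnerProductSpace ℂ E] [CompleteSpace E]
    [NormedAddCommGroup F] [InnerProductSpace ℂ F]
    [NormedAddCommGroup G] [InnerProductSpace ℂ G]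
    (A : E →L[ℂ] F) (B : E →L[ℂ] G) (hB : IsCompactOperator B)
    (h : ∀ x, ‖x‖ ≤ ‖A x‖ + ‖B x‖) :
    FiniteDimensional ℂ (LinearMap.ker A.toLinearMap) ∧
    IsClosed (LinearMap.range A.toLinearMap : Set F) := by
  have hcl : IsClosed (LinearMap.ker A.toLinearMap : Set E) := A.isClosed_ker
  have : CompleteSpace (LinearMap.ker A.toLinearMap) := hcl.completeSpace_coe
  refine ⟨aux_findim (B.comp (LinearMap.ker A.toLinearMap).subtypeL)
    (hB.comp_clm _) ?_, ?_⟩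
  · intro x
    have h1 := h x
    have h2 : A (x : E) = 0 := x.2
    rw [h2, norm_zero, zero_add] at h1
    exact h1
  · set N := LinearMap.ker A.toLinearMap with hN
    obtain ⟨C, hC⟩ := aux_bdd_below (A.comp Nᗮ.subtypeL) (B.comp Nᗮ.subtypeL)
      (hB.comp_clm _) (fun x => h x) (by
        intro x hx
        have hxN : (x : E) ∈ N := hx
        have := N.inner_right_of_mem_orthogonal hxN x.2
        exact Subtype.ext (inner_self_eq_zero.mp this))
    have := hC.isClosed_range (A.comp Nᗮ.subtypeL).uniformContinuous
    convert this using 1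
    ext y
    constructor
    · rintro ⟨x, rfl⟩
      obtain ⟨u, hu, v, hv, rfl⟩ := N.exists_add_mem_mem_orthogonal x
      refine ⟨⟨v, hv⟩, ?_⟩
      have hu0 : A u = 0 := hu
      simp [hu0]
    · rintro ⟨x, rfl⟩
      exact ⟨x, rfl⟩

theorem aux_norm (W : Submodule ℂ K) [CompleteSpace W] (x : K) :
    ‖x‖ ≤ ‖W.orthogonalProjectionOnto x‖ + ‖Wᗮ.orthogonalProjectionOnto x‖ := by
  have := W.norm_sq_eq_add_norm_sq_projection x
  nlinarith [norm_nonneg x, norm_nonneg (W.orthogonalProjectionOnto x),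
    norm_nonneg (Wᗮ.orthogonalProjectionOnto x)]

theorem aux_coker (V : Submodule ℂ H) (W : Submodule ℂ K) [CompleteSpace W]
    (U : Submodule ℂ H) (Q : H ≃ₗᵢ[ℂ] K) (hVU : Vᗮ ≤ U)
    (A : V →L[ℂ] W) (B : U →L[ℂ] W)
    (hA : ∀ v, A v = W.orthogonalProjectionOnto (Q v))
    (hBB : ∀ v, B v = W.orthogonalProjectionOnto (Q v))
    (hB : IsCompactOperator B) :
    FiniteDimensional ℂ (LinearMap.range A.toLinearMap)ᗮ := by
  have hmem : ∀ w : (LinearMap.range A.toLinearMap)ᗮ, Q.symm ((w : W) : K) ∈ U := by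
    intro w
    apply hVU
    rw [Submodule.mem_orthogonal]
    intro v hv
    have h1 := Submodule.inner_right_of_mem_orthogonal
      (LinearMap.mem_range_self A.toLinearMap ⟨v, hv⟩) w.2
    rw [ContinuousLinearMap.coe_coe, hA,
      Submodule.inner_orthogonalProjectionOnto_eq_of_mem_right] at h1
    rw [← Q.inner_map_map, Q.apply_symm_apply]
    exact h1
  let j : (LinearMap.range A.toLinearMap)ᗮ →L[ℂ] U :=
    (Q.symm.toLinearIsometry.toContinuousLinearMap.comp
      (W.subtypeL.comp (LinearMap.range A.toLinearMap)ᗮ.subtypeL)).codRestrict U hmem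
  refine aux_findim (B.comp j) (hB.comp_clm j) ?_
  intro w
  have : B (j w) = (w : W) := by
    rw [hBB]
    have : Q (j w : H) = ((w : W) : K) := Q.apply_symm_apply _
    rw [this, Submodule.orthogonalProjectionOnto_mem_subspace_eq_self]
  rw [ContinuousLinearMap.comp_apply, this]
  exact le_rfl

/-- if the off-diagonal compressions `Q₊₋`, `Q₋₊` of a unitary `Q` are
compact, then the kernels of the diagonal compressions are finite-dimensional, their
ranges are closed, and the orthogonal complements of their ranges are
finite-dimensional. -/
theorem diagonal_compressions_fredholm_data
    (V : Submodule ℂ H) [CompleteSpace V] (W : Submodule ℂ K) [CompleteSpace W]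
    (Q : H ≃ₗᵢ[ℂ] K)
    (hpm : IsCompactOperator (Qpm V W Q)) (hmp : IsCompactOperator (Qmp V W Q)) :
    FiniteDimensional ℂ (LinearMap.ker (Qpp V W Q).toLinearMap) ∧
    FiniteDimensional ℂ (LinearMap.ker (Qmm V W Q).toLinearMap) ∧
    IsClosed (LinearMap.range (Qpp V W Q).toLinearMap : Set W) ∧
    IsClosed (LinearMap.range (Qmm V W Q).toLinearMap : Set Wᗮ) ∧
    FiniteDimensional ℂ (LinearMap.range (Qpp V W Q).toLinearMap)ᗮ ∧
    FiniteDimensional ℂ (LinearMap.range (Qmm V W Q).toLinearMap)ᗮ := by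
  obtain ⟨h1, h3⟩ := aux_ker_range (Qpp V W Q) (Qmp V W Q) hmp (fun x => by
    have := aux_norm W (Q x)
    rw [Q.norm_map] at this
    exact this)
  obtain ⟨h2, h4⟩ := aux_ker_range (Qmm V W Q) (Qpm V W Q) hpm (fun x => by
    have := aux_norm W (Q x)
    rw [Q.norm_map, add_comm] at this
    exact this)
  refine ⟨h1, h2, h3, h4, ?_, ?_⟩
  · exact aux_coker V W Vᗮ Q le_rfl _ (Qpm V W Q) (fun _ => rfl) (fun _ => rfl) hpm
  · exact aux_coker Vᗮ Wᗮ V Q (Submodule.orthogonal_orthogonal V).le _ (Qmp V W Q)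
      (fun _ => rfl) (fun _ => rfl) hmp

end
end

section
/- Let H and K be complex Hilbert spaces, V ⊆ H and W ⊆ K closed subspaces, Q : H ≃ₗᵢ[ℂ] K a unitary operator, and Q₊₊, Q₋₋, Q₊₋, Q₋₊ its compressions. If Q₊₋ and Q₋₊ are compact operators, then all four kernels ker Q₊₊, ker Q₊₊†, ker Q₋₋, ker Q₋₋† are finite-dimensional and the indices are opposite: (finrank_ℂ ker Q₊₊ : ℤ) − finrank_ℂ ker Q₊₊† = −((finrank_ℂ ker Q₋₋ : ℤ) − finrank_ℂ ker Q₋₋†). -/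
noncomputable section

variable {H K : Type*}
  [NormedAddCommGroup H] [InnerProductSpace ℂ H] [CompleteSpace H]
  [NormedAddCommGroup K] [InnerProductSpace ℂ K] [CompleteSpace K]

variable {H K : Type*}
  [NormedAddCommGroup H] [InnerProductSpace ℂ H] [CompleteSpace H]
  [NormedAddCommGroup K] [InnerProductSpace ℂ K] [CompleteSpace K]

theorem aux_mem_ker_adjoint {E F : Type*}
    [NormedAddCommGroup E] [InnerProductSpace ℂ E] [CompleteSpace E]
    [NormedAddCommGroup F] [InnerProductSpace ℂ F] [CompleteSpace F]
    (T : E →L[ℂ] F) (w : F) :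
    w ∈ LinearMap.ker (ContinuousLinearMap.adjoint T).toLinearMap ↔
      ∀ u, inner ℂ (T u) w = 0 := by
  rw [LinearMap.mem_ker]
  constructor
  · intro h u
    rw [← ContinuousLinearMap.adjoint_inner_right]
    have h' : ContinuousLinearMap.adjoint T w = 0 := h
    rw [h', inner_zero_right]
  · intro h
    refine ext_inner_left ℂ fun u => ?_
    rw [inner_zero_right, ← h u]
    exact ContinuousLinearMap.adjoint_inner_right T u w

theorem aux_finite {E F : Type*}
    [NormedAddCommGroup E] [InnerProductSpace ℂ E] [CompleteSpace E]
    [NormedAddCommGroup F] [InnerProductSpace ℂ F] [CompleteSpace F]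
    (T : E →L[ℂ] F) (hT : IsCompactOperator T) (S : Submodule ℂ E)
    (h : ∀ x ∈ S, ∀ y, inner ℂ (T y) (T x) = inner ℂ y x) : FiniteDimensional ℂ S := by
  have hc : IsCompactOperator ((ContinuousLinearMap.adjoint T) ∘L T) :=
    hT.clm_comp (ContinuousLinearMap.adjoint T)
  have hfd := ContinuousLinearMap.finite_dimensional_eigenspace hc 1 one_ne_zero
  refine Submodule.finiteDimensional_of_le (S₂ := Module.End.eigenspace
    (((ContinuousLinearMap.adjoint T) ∘L T : E →L[ℂ] E) : E →ₗ[ℂ] E) 1) ?_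
  intro x hx
  rw [Module.End.mem_eigenspace_iff, one_smul]
  refine ext_inner_left ℂ fun y => ?_
  rw [← h x hx y]
  exact ContinuousLinearMap.adjoint_inner_right T y (T x)

theorem aux_inner_proj (W : Submodule ℂ K) [W.HasOrthogonalProjection] (a : K) (w : W) :
    inner ℂ (W.orthogonalProjectionOnto a) w = inner ℂ a (w : K) := by
  simp

theorem aux_proj_zero (W : Submodule ℂ K) [W.HasOrthogonalProjection] (a : K) :
    W.orthogonalProjectionOnto a = 0 ↔ a ∈ Wᗮ := by
  simp

theorem aux_equiv {E F G : Type*} [AddCommGroup E] [Module ℂ E] [AddCommGroup F] [Module ℂ F]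
    [AddCommGroup G] [Module ℂ G] (f : E →ₗ[ℂ] G) (g : F →ₗ[ℂ] G)
    (hf : Function.Injective f) (hg : Function.Injective g)
    (S : Submodule ℂ E) (T : Submodule ℂ F) (h : S.map f = T.map g) : Nonempty (S ≃ₗ[ℂ] T) :=
  ⟨(Submodule.equivMapOfInjective f hf S).trans
    ((LinearEquiv.ofEq _ _ h).trans (Submodule.equivMapOfInjective g hg T).symm)⟩

/-- The general kernel identification: for closed subspaces `A, B`, with compressions. -/
theorem aux_main (A A' : Submodule ℂ H) (B B' : Submodule ℂ K)
    [CompleteSpace A] [CompleteSpace A'] [CompleteSpace B] [CompleteSpace B']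
    [B.HasOrthogonalProjection] [B'.HasOrthogonalProjection]
    (hA : A'ᗮ = A) (hB : Bᗮ = B') (Q : H ≃ₗᵢ[ℂ] K)
    (T : A →L[ℂ] B) (hT : ∀ u, T u = B.orthogonalProjectionOnto (Q u))
    (R : A →L[ℂ] B') (hR : ∀ u, R u = B'.orthogonalProjectionOnto (Q u))
    (S : A' →L[ℂ] B') (hS : ∀ u, S u = B'.orthogonalProjectionOnto (Q u))
    (hc : IsCompactOperator R) :
    FiniteDimensional ℂ (LinearMap.ker T.toLinearMap) ∧
    Nonempty (LinearMap.ker T.toLinearMap ≃ₗ[ℂ]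
      LinearMap.ker (ContinuousLinearMap.adjoint S).toLinearMap) := by
  have hk : ∀ x : A, x ∈ LinearMap.ker T.toLinearMap ↔ Q x ∈ B' := by
    intro x
    rw [LinearMap.mem_ker, ← hB, ← aux_proj_zero, ← hT]
    rfl
  constructor
  · refine aux_finite R hc _ fun x hx y => ?_
    rw [hR y, aux_inner_proj, hR x,
      Submodule.coe_orthogonalProjectionOnto_apply, Submodule.starProjection_eq_self_iff.2 ((hk x).1 hx)]
    exact Q.inner_map_map y x
  · refine aux_equiv (Q.toLinearEquiv.toLinearMap ∘ₗ A.subtype) B'.subtype ?_ ?_ _ _ ?_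
    · exact Q.injective.comp Subtype.val_injective
    · exact Subtype.val_injective
    · ext k
      simp only [Submodule.mem_map]
      constructor
      · rintro ⟨x, hx, rfl⟩
        refine ⟨⟨Q x, (hk x).1 hx⟩, ?_, rfl⟩
        rw [aux_mem_ker_adjoint]
        intro u
        rw [hS, aux_inner_proj]
        refine (Q.inner_map_map _ _).trans ?_
        have hx2 : (x : H) ∈ A'ᗮ := hA ▸ x.2
        exact hx2 u u.2
      · rintro ⟨w, hw, rfl⟩
        rw [aux_mem_ker_adjoint] at hw
        have hm : Q.symm w ∈ A := by
          rw [← hA]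
          intro u hu
          have := hw ⟨u, hu⟩
          rw [hS, aux_inner_proj] at this
          rw [← this, ← Q.inner_map_map, Q.apply_symm_apply]
        refine ⟨⟨Q.symm w, hm⟩, ?_, ?_⟩
        · rw [hk]; simp
        · simp

/-- if the off-diagonal compressions of a unitary `Q` are compact, then
the kernels of `Q₊₊`, `Q₊₊†`, `Q₋₋`, `Q₋₋†` are finite-dimensional and
`ind Q₊₊ = - ind Q₋₋`, where `ind T = dim ker T - dim ker T†`. -/
theorem diagonal_compressions_opposite_index
    (V : Submodule ℂ H) [CompleteSpace V] (W : Submodule ℂ K) [CompleteSpace W]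
    (Q : H ≃ₗᵢ[ℂ] K)
    (hpm : IsCompactOperator (Qpm V W Q)) (hmp : IsCompactOperator (Qmp V W Q)) :
    FiniteDimensional ℂ (LinearMap.ker (Qpp V W Q).toLinearMap) ∧
    FiniteDimensional ℂ (LinearMap.ker (ContinuousLinearMap.adjoint (Qpp V W Q)).toLinearMap) ∧
    FiniteDimensional ℂ (LinearMap.ker (Qmm V W Q).toLinearMap) ∧
    FiniteDimensional ℂ (LinearMap.ker (ContinuousLinearMap.adjoint (Qmm V W Q)).toLinearMap) ∧
    (Module.finrank ℂ (LinearMap.ker (Qpp V W Q).toLinearMap) : ℤ) -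
        Module.finrank ℂ (LinearMap.ker (ContinuousLinearMap.adjoint (Qpp V W Q)).toLinearMap) =
      -((Module.finrank ℂ (LinearMap.ker (Qmm V W Q).toLinearMap) : ℤ) -
        Module.finrank ℂ (LinearMap.ker (ContinuousLinearMap.adjoint (Qmm V W Q)).toLinearMap)) := by
  obtain ⟨f1, ⟨e1⟩⟩ := aux_main V Vᗮ W Wᗮ (Submodule.orthogonal_orthogonal V) rfl Q
    (Qpp V W Q) (fun _ => rfl) (Qmp V W Q) (fun _ => rfl) (Qmm V W Q) (fun _ => rfl) hmp
  obtain ⟨f2, ⟨e2⟩⟩ := aux_main Vᗮ V Wᗮ W rfl (Submodule.orthogonal_orthogonal W) Q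
    (Qmm V W Q) (fun _ => rfl) (Qpm V W Q) (fun _ => rfl) (Qpp V W Q) (fun _ => rfl) hpm
  refine ⟨f1, e2.finiteDimensional, f2, e1.finiteDimensional, ?_⟩
  rw [e1.finrank_eq, e2.finrank_eq]
  ring

end
end

section
/- Let Γ be a group with unitary representations ρ, ρ₁, ρ₂ on complex Hilbert spaces H, H₁, H₂. Let A : H →L[ℂ] H₁ and B : H →L[ℂ] H₂ be bounded Γ-equivariant operators with B surjective. Then there exist continuous linear equivalences 𝓘 : (ker B) × H₂ ≃L[ℂ] H and 𝓙 : H₁ × H₂ ≃L[ℂ] H₁ × H₂ such that (i) 𝓙((A(𝓘(u, w)), B(𝓘(u, w)))) = (A u, w) for all u ∈ ker B and w ∈ H₂, and (ii) 𝓘 and 𝓙 are Γ-equivariant, where ker B carries the restriction of ρ (which leaves ker B invariant), (ker B) × H₂ and H₁ × H₂ carry the product actions, and H carries ρ. -/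
/-- for bounded `Γ`-equivariant operators `A : H → H₁`, `B : H → H₂`
with `B` surjective, there are `Γ`-equivariant continuous linear equivalences
`𝓘 : ker B × H₂ ≃ H` and `𝓙 : H₁ × H₂ ≃ H₁ × H₂` with
`𝓙 (A (𝓘 (u, w)), B (𝓘 (u, w))) = (A u, w)`. -/
theorem exists_gamma_equivariant_operator_isomorphisms
    {Γ : Type*} [Group Γ]
    {H H₁ H₂ : Type*}
    [NormedAddCommGroup H] [InnerProductSpace ℂ H] [CompleteSpace H]
    [NormedAddCommGroup H₁] [InnerProductSpace ℂ H₁] [CompleteSpace H₁]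
    [NormedAddCommGroup H₂] [InnerProductSpace ℂ H₂] [CompleteSpace H₂]
    (ρ : Γ →* (H ≃ₗᵢ[ℂ] H)) (ρ₁ : Γ →* (H₁ ≃ₗᵢ[ℂ] H₁)) (ρ₂ : Γ →* (H₂ ≃ₗᵢ[ℂ] H₂))
    (A : H →L[ℂ] H₁) (B : H →L[ℂ] H₂)
    (hA : ∀ (γ : Γ) (x : H), A (ρ γ x) = ρ₁ γ (A x))
    (hB : ∀ (γ : Γ) (x : H), B (ρ γ x) = ρ₂ γ (B x))
    (hBsurj : Function.Surjective B) :
    ∃ (I : (LinearMap.ker (B : H →ₗ[ℂ] H₂) × H₂) ≃L[ℂ] H) (J : (H₁ × H₂) ≃L[ℂ] (H₁ × H₂)),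
      (∀ (u : LinearMap.ker (B : H →ₗ[ℂ] H₂)) (w : H₂),
        J (A (I (u, w)), B (I (u, w))) = (A (u : H), w)) ∧
      (∀ (γ : Γ) (u u' : LinearMap.ker (B : H →ₗ[ℂ] H₂)) (w : H₂), (u' : H) = ρ γ (u : H) →
        I (u', ρ₂ γ w) = ρ γ (I (u, w))) ∧
      (∀ (γ : Γ) (p : H₁ × H₂),
        J (ρ₁ γ p.1, ρ₂ γ p.2) = (ρ₁ γ (J p).1, ρ₂ γ (J p).2)) := by
  set K := LinearMap.ker (B : H →ₗ[ℂ] H₂) with hK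
  have hmem : ∀ x, x ∈ K ↔ B x = 0 := fun x => by simp [hK]
  have hKc : IsClosed (K : Set H) := ContinuousLinearMap.isClosed_ker B
  have : CompleteSpace K := hKc.completeSpace_coe
  have hdis : ∀ x, x ∈ K → x ∈ Kᗮ → x = 0 := fun x h h' =>
    inner_self_eq_zero.1 (Submodule.inner_right_of_mem_orthogonal h h')
  -- bounded right inverse with values in the orthogonal complement
  obtain ⟨S, hS, hSo⟩ : ∃ S : H₂ →L[ℂ] H, (∀ w, B (S w) = w) ∧ ∀ w, S w ∈ Kᗮ := by
    let e := ContinuousLinearEquiv.ofBijective (B.comp Kᗮ.subtypeL)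
      (by
        rw [LinearMap.ker_eq_bot']
        intro x hx
        exact Subtype.ext (hdis x ((hmem _).2 hx) x.2))
      (by
        rw [LinearMap.range_eq_top]
        intro w
        obtain ⟨x, rfl⟩ := hBsurj w
        obtain ⟨y, hy, z, hz, rfl⟩ := K.exists_add_mem_mem_orthogonal x
        refine ⟨⟨z, hz⟩, ?_⟩
        simp [(hmem y).1 hy])
    refine ⟨Kᗮ.subtypeL.comp (e.symm : H₂ →L[ℂ] Kᗮ), fun w => ?_, fun w => (e.symm w).2⟩
    exact e.apply_symm_apply w
  have hSρ : ∀ γ w, S (ρ₂ γ w) = ρ γ (S w) := by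
    intro γ w
    have h1 : ρ γ (S w) ∈ Kᗮ := by
      rw [Submodule.mem_orthogonal]
      intro u hu
      have h2 : ρ γ (ρ γ⁻¹ u) = u := by
        change (ρ γ * ρ γ⁻¹) u = u
        rw [← map_mul, mul_inv_cancel, map_one]
        rfl
      rw [← h2, LinearIsometryEquiv.inner_map_map]
      refine Submodule.inner_right_of_mem_orthogonal ?_ (hSo w)
      rw [hmem, hB, (hmem u).1 hu, map_zero]
    refine sub_eq_zero.1 (hdis _ ?_ (Submodule.sub_mem _ (hSo _) h1))
    rw [hmem, map_sub, hB, hS, hS, sub_self]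
  let I : (K × H₂) ≃L[ℂ] H := ContinuousLinearEquiv.equivOfInverse
    (K.subtypeL.coprod S)
    (((ContinuousLinearMap.id ℂ H - S.comp B).codRestrict K
      (fun x => by simp [hmem, hS])).prod B)
    (by
      rintro ⟨u, w⟩
      have := (hmem u).1 u.2
      ext <;> simp [this, hS])
    (by intro x; simp)
  have hI : ∀ u w, I (u, w) = (u : H) + S w := fun u w => by
    simp [I]
  let f : (H₁ × H₂) →L[ℂ] (H₁ × H₂) := (ContinuousLinearMap.fst ℂ H₁ H₂ -
      (A.comp S).comp (ContinuousLinearMap.snd ℂ H₁ H₂)).prod (ContinuousLinearMap.snd ℂ H₁ H₂)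
  let g : (H₁ × H₂) →L[ℂ] (H₁ × H₂) := (ContinuousLinearMap.fst ℂ H₁ H₂ +
      (A.comp S).comp (ContinuousLinearMap.snd ℂ H₁ H₂)).prod (ContinuousLinearMap.snd ℂ H₁ H₂)
  let J : (H₁ × H₂) ≃L[ℂ] (H₁ × H₂) := ContinuousLinearEquiv.equivOfInverse f g
    (by rintro ⟨a, b⟩; simp [f, g]) (by rintro ⟨a, b⟩; simp [f, g])
  have hJ : ∀ p, J p = (p.1 - A (S p.2), p.2) := fun p => by
    simp [J, f]
  refine ⟨I, J, fun u w => ?_, fun γ u u' w h => ?_, fun γ p => ?_⟩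
  · have := (hmem u).1 u.2
    simp [hI, hJ, hS, this]
  · rw [hI, hI, h, hSρ, map_add]
  · simp [hJ, hSρ, hA]
end

section
/- Let H, H₁, H₂ be complex Hilbert spaces, and A : H →L[ℂ] H₁, B : H →L[ℂ] H₂ bounded linear operators with B surjective. Then the range of the restriction A|_{ker B} : ker B → H₁ is closed in H₁ if and only if the range of the operator A ⊕ B : H →L[ℂ] H₁ × H₂, x ↦ (A x, B x), is closed in H₁ × H₂. -/
/-- for bounded operators `A : H → H₁`, `B : H → H₂` between complex
Hilbert spaces with `B` surjective, the range of `A|_{ker B}` is closed iff the range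
of `A ⊕ B : x ↦ (A x, B x)` is closed. -/
theorem range_restriction_closed_iff_range_prod_closed
    {H H₁ H₂ : Type*}
    [NormedAddCommGroup H] [InnerProductSpace ℂ H] [CompleteSpace H]
    [NormedAddCommGroup H₁] [InnerProductSpace ℂ H₁] [CompleteSpace H₁]
    [NormedAddCommGroup H₂] [InnerProductSpace ℂ H₂] [CompleteSpace H₂]
    (A : H →L[ℂ] H₁) (B : H →L[ℂ] H₂) (hBsurj : Function.Surjective B) :
    IsClosed (LinearMap.range (A.comp (LinearMap.ker B.toLinearMap).subtypeL).toLinearMap : Set H₁) ↔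
      IsClosed (LinearMap.range (A.prod B).toLinearMap : Set (H₁ × H₂)) := by
  constructor
  · intro h
    have hq : Topology.IsQuotientMap (Prod.map (id : H₁ → H₁) B) :=
      (IsOpenMap.id.prodMap (B.isOpenMap hBsurj)).isQuotientMap
        (continuous_id.prodMap B.continuous) (Function.surjective_id.prodMap hBsurj)
    rw [← hq.isClosed_preimage]
    have hc : Continuous (fun p : H₁ × H => p.1 - A p.2) := by fun_prop
    convert h.preimage hc using 1
    ext ⟨y, u⟩
    constructor
    · rintro ⟨x, hx⟩
      have h1 : A x = y := congrArg Prod.fst hx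
      have h2 : B x = B u := congrArg Prod.snd hx
      refine ⟨⟨x - u, ?_⟩, ?_⟩
      · change B (x - u) = 0
        rw [map_sub, h2, sub_self]
      · change A (x - u) = y - A u
        rw [map_sub, h1]
    · rintro ⟨⟨x, hx⟩, hxy⟩
      have h1 : A x = y - A u := hxy
      have h2 : B x = 0 := hx
      refine ⟨x + u, ?_⟩
      change (A (x + u), B (x + u)) = (y, B u)
      rw [map_add, map_add, h1, h2, sub_add_cancel, zero_add]
  · intro h
    have hc : Continuous (fun y : H₁ => (y, (0 : H₂))) := by fun_prop
    convert h.preimage hc using 1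
    ext y
    constructor
    · rintro ⟨⟨x, hx⟩, hxy⟩
      exact ⟨x, Prod.ext hxy hx⟩
    · rintro ⟨x, hx⟩
      exact ⟨⟨x, congrArg Prod.snd hx⟩, congrArg Prod.fst hx⟩
end

section
/- Let Γ be a group with unitary representations ρ, ρ₁, ρ₂ on complex Hilbert spaces H, H₁, H₂, and let A : H →L[ℂ] H₁, B : H →L[ℂ] H₂ be bounded Γ-equivariant operators with B surjective. Assume the range of A|_{ker B} is closed in H₁ (equivalently, the range of A ⊕ B is closed in H₁ × H₂). Then there exists a Γ-equivariant continuous linear equivalence between the orthogonal complement of range(A|_{ker B}) in H₁ and the orthogonal complement of range(A ⊕ B) in H₁ × H₂, where these orthogonal complements carry the restrictions of ρ₁ and of the product representation ρ₁ × ρ₂ respectively (both subspaces being Γ-invariant). -/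
noncomputable section

variable {H H₁ H₂ : Type*}
  [NormedAddCommGroup H] [InnerProductSpace ℂ H] [CompleteSpace H]
  [NormedAddCommGroup H₁] [InnerProductSpace ℂ H₁] [CompleteSpace H₁]
  [NormedAddCommGroup H₂] [InnerProductSpace ℂ H₂] [CompleteSpace H₂]

/-- The range of the restriction `A|_{ker B}`, as a subspace of `H₁`. -/
def rangeRestriction (A : H →L[ℂ] H₁) (B : H →L[ℂ] H₂) : Submodule ℂ H₁ :=
  LinearMap.range (A.comp (LinearMap.ker B.toLinearMap).subtypeL).toLinearMap

/-- The range of `A ⊕ B : x ↦ (A x, B x)`, as a subspace of the Hilbert-space product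
`WithLp 2 (H₁ × H₂)` (the product `H₁ × H₂` with the `ℓ²`-norm and inner product). -/
def rangeProd (A : H →L[ℂ] H₁) (B : H →L[ℂ] H₂) : Submodule ℂ (WithLp 2 (H₁ × H₂)) :=
  LinearMap.range ((WithLp.linearEquiv 2 ℂ (H₁ × H₂)).symm.toLinearMap ∘ₗ
    (A.prod B : H →ₗ[ℂ] H₁ × H₂))

theorem aux_mem (A : H →L[ℂ] H₁) (B : H →L[ℂ] H₂) (p : WithLp 2 (H₁ × H₂)) :
    p ∈ (rangeProd A B)ᗮ ↔ ∀ x, inner ℂ (A x) p.fst + inner ℂ (B x) p.snd = 0 := by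
  rw [Submodule.mem_orthogonal]
  constructor
  · intro h x
    have := h _ ⟨x, rfl⟩
    simpa [WithLp.prod_inner_apply] using this
  · rintro h _ ⟨x, rfl⟩
    simpa [WithLp.prod_inner_apply] using h x

theorem aux_mem' (A : H →L[ℂ] H₁) (B : H →L[ℂ] H₂) (u : H₁) :
    u ∈ (rangeRestriction A B)ᗮ ↔ ∀ x, B x = 0 → inner ℂ (A x) u = 0 := by
  rw [Submodule.mem_orthogonal]
  constructor
  · intro h x hx
    exact h _ ⟨⟨x, hx⟩, rfl⟩
  · rintro h _ ⟨⟨x, hx⟩, rfl⟩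
    exact h x hx

theorem aux_rinv (B : H →L[ℂ] H₂) (hB : Function.Surjective B) :
    ∃ S : H₂ →L[ℂ] H, ∀ y, B (S y) = y := by
  let K : Submodule ℂ H := LinearMap.ker B.toLinearMap
  have hK : IsClosed (K : Set H) := B.isClosed_ker
  haveI : CompleteSpace K := hK.completeSpace_coe
  let T : Kᗮ →L[ℂ] H₂ := B.comp Kᗮ.subtypeL
  have hinj : LinearMap.ker T.toLinearMap = ⊥ := by
    rw [LinearMap.ker_eq_bot']
    rintro ⟨x, hx⟩ h
    have h1 : x ∈ K := h
    have := Submodule.inner_right_of_mem_orthogonal h1 hx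
    exact Subtype.ext (inner_self_eq_zero.1 this)
  have hsurj : LinearMap.range T.toLinearMap = ⊤ := by
    rw [LinearMap.range_eq_top]
    intro y
    obtain ⟨x, rfl⟩ := hB y
    obtain ⟨a, ha, b, hb, rfl⟩ := K.exists_add_mem_mem_orthogonal x
    refine ⟨⟨b, hb⟩, ?_⟩
    have : B a = 0 := ha
    simp [T, this]
  let E := ContinuousLinearEquiv.ofBijective T hinj hsurj
  exact ⟨Kᗮ.subtypeL.comp (E.symm : H₂ →L[ℂ] Kᗮ), fun y =>
    ContinuousLinearEquiv.ofBijective_apply_symm_apply T hinj hsurj y⟩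

/-- for bounded `Γ`-equivariant operators `A : H → H₁`, `B : H → H₂` with
`B` surjective and `A|_{ker B}` of closed range, there is a `Γ`-equivariant continuous
linear equivalence between the orthogonal complement of `range (A|_{ker B})` in `H₁` and
the orthogonal complement of `range (A ⊕ B)` in `H₁ × H₂` (with its Hilbert-space
structure), where the complements carry the restricted representations. -/
theorem equivariant_equiv_of_range_complements
    {Γ : Type*} [Group Γ]
    (ρ : Γ →* (H ≃ₗᵢ[ℂ] H)) (ρ₁ : Γ →* (H₁ ≃ₗᵢ[ℂ] H₁)) (ρ₂ : Γ →* (H₂ ≃ₗᵢ[ℂ] H₂))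
    (A : H →L[ℂ] H₁) (B : H →L[ℂ] H₂)
    (hA : ∀ (γ : Γ) (x : H), A (ρ γ x) = ρ₁ γ (A x))
    (hB : ∀ (γ : Γ) (x : H), B (ρ γ x) = ρ₂ γ (B x))
    (hBsurj : Function.Surjective B)
    (hclosed : IsClosed ((rangeRestriction A B : Submodule ℂ H₁) : Set H₁)) :
    ∃ e : (rangeRestriction A B)ᗮ ≃L[ℂ] (rangeProd A B)ᗮ,
      ∀ (γ : Γ) (v v' : (rangeRestriction A B)ᗮ), (v' : H₁) = ρ₁ γ (v : H₁) →
        (WithLp.equiv 2 (H₁ × H₂)) (e v' : WithLp 2 (H₁ × H₂)) =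
          (ρ₁ γ ((WithLp.equiv 2 (H₁ × H₂)) (e v : WithLp 2 (H₁ × H₂))).1,
           ρ₂ γ ((WithLp.equiv 2 (H₁ × H₂)) (e v : WithLp 2 (H₁ × H₂))).2) := by
  have hinj0 : ∀ p q : WithLp 2 (H₁ × H₂), p ∈ (rangeProd A B)ᗮ → q ∈ (rangeProd A B)ᗮ →
      p.fst = q.fst → p.snd = q.snd := by
    intro p q hp hq h
    rw [aux_mem] at hp hq
    refine ext_inner_left ℂ fun y => ?_
    obtain ⟨x, rfl⟩ := hBsurj y
    have h1 := hp x
    have h2 := hq x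
    rw [h] at h1
    exact add_left_cancel (h1.trans h2.symm)
  obtain ⟨S, hS⟩ := aux_rinv B hBsurj
  let W : H₁ →L[ℂ] H₂ := -(ContinuousLinearMap.adjoint (A.comp S))
  have hW : ∀ u ∈ (rangeRestriction A B)ᗮ, WithLp.toLp 2 (u, W u) ∈ (rangeProd A B)ᗮ := by
    intro u hu
    rw [aux_mem'] at hu
    rw [aux_mem]
    intro x
    have := hu (x - S (B x)) (by simp [hS])
    rw [map_sub, inner_sub_left] at this
    simpa [W, ContinuousLinearMap.adjoint_inner_right, inner_neg_right, sub_eq_add_neg] using this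
  have hfst : ∀ p ∈ (rangeProd A B)ᗮ, p.fst ∈ (rangeRestriction A B)ᗮ := by
    intro p hp
    rw [aux_mem] at hp
    rw [aux_mem']
    intro x hx
    simpa [hx] using hp x
  let F : H₁ →L[ℂ] WithLp 2 (H₁ × H₂) :=
    ((WithLp.prodContinuousLinearEquiv 2 ℂ H₁ H₂).symm : H₁ × H₂ →L[ℂ] WithLp 2 (H₁ × H₂)).comp
      ((ContinuousLinearMap.id ℂ H₁).prod W)
  let G : WithLp 2 (H₁ × H₂) →L[ℂ] H₁ := (ContinuousLinearMap.fst ℂ H₁ H₂).comp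
    ((WithLp.prodContinuousLinearEquiv 2 ℂ H₁ H₂) : WithLp 2 (H₁ × H₂) →L[ℂ] H₁ × H₂)
  let F' : (rangeRestriction A B)ᗮ →L[ℂ] (rangeProd A B)ᗮ :=
    (F.comp (rangeRestriction A B)ᗮ.subtypeL).codRestrict _ (fun u => hW u u.2)
  let G' : (rangeProd A B)ᗮ →L[ℂ] (rangeRestriction A B)ᗮ :=
    (G.comp (rangeProd A B)ᗮ.subtypeL).codRestrict _ (fun p => hfst p p.2)
  let e : (rangeRestriction A B)ᗮ ≃L[ℂ] (rangeProd A B)ᗮ :=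
    ContinuousLinearEquiv.equivOfInverse F' G' (fun u => rfl) (fun p => by
      apply Subtype.ext
      have h2 := hinj0 (F' (G' p)) p (F' (G' p)).2 p.2 rfl
      exact (WithLp.equiv 2 (H₁ × H₂)).injective (Prod.ext rfl h2))
  refine ⟨e, fun γ v v' hv => ?_⟩
  have he : ∀ u, ((e u : WithLp 2 (H₁ × H₂))).fst = u := fun u => rfl
  have hq : WithLp.toLp 2 (ρ₁ γ (e v : WithLp 2 (H₁ × H₂)).fst,
      ρ₂ γ (e v : WithLp 2 (H₁ × H₂)).snd) ∈ (rangeProd A B)ᗮ := by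
    have h0 := (e v).2
    rw [aux_mem] at h0 ⊢
    intro x
    obtain ⟨y, rfl⟩ := (ρ γ).surjective x
    simpa [hA, hB] using h0 y
  have h1 : (e v' : WithLp 2 (H₁ × H₂)).fst = ρ₁ γ (e v : WithLp 2 (H₁ × H₂)).fst := by
    rw [he, he, hv]
  exact Prod.ext h1 (hinj0 _ _ (e v').2 hq h1)

end
end
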